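/- Hölder-in-δ bound for the difference of E_x along a Hölder boundary: Let T > 0 and let s : [0,T] → ℝ satisfy |s(t) − s(τ)| ≤ |t − τ|^β for all t, τ ∈ [0,T], for some β > α_m/2. Then there exists a constant C > 0 (independent of x, t and δ) such that for all t ∈ (0,T], all δ ∈ (0,t) and all x ∈ ℝ, ∫_{t−δ}^{t} |E_x(x − s(t), t − τ) − E_x(x − s(τ), t − τ)| dτ ≤ C δ^{β − α_m/2}. -/

import Mathlib

open MeasureTheory Real Filter Set Topology intervalIntegral

noncomputable def wrightW (β δ z : ℝ) : ℝ :=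
  ∑' k : ℕ, z ^ k / (k.factorial * Real.Gamma (δ - β * k))

/-- Laplace convolution on `(0, ∞)`. -/
noncomputable def laplaceConv (f g : ℝ → ℝ) : ℝ → ℝ :=
  fun t => ∫ τ in (0:ℝ)..t, f τ * g (t - τ)

/-- Iterated Laplace convolution `h₀ ∗ h₁ ∗ ⋯ ∗ hₙ`. -/
noncomputable def iterConv : (n : ℕ) → (Fin (n + 1) → ℝ → ℝ) → ℝ → ℝ
  | 0, h => h 0
  | n + 1, h => laplaceConv (iterConv n (fun i => h i.castSucc)) (h (Fin.last (n + 1)))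

/-- `S^μ_m(t; -ℓ₁, …, -ℓ_m; -α₁, …, -α_m)` with the decomposition `μ₁ = μ`,
`μ_j = 0` for `j ≥ 2`: the Laplace convolution of
`h_j(t) = t^{μ_j - 1} W(-ℓ_j t^{-α_j}; -α_j, μ_j)`.  Indices run over
`Fin (n+1)`, i.e. the number of terms is `m = n + 1 ≥ 1`. -/
noncomputable def Sconv (n : ℕ) (μ : ℝ) (α ℓ : Fin (n + 1) → ℝ) : ℝ → ℝ :=
  iterConv n (fun j t =>
    t ^ ((if j = 0 then μ else 0) - 1) *
      wrightW (α j) (if j = 0 then μ else 0) (-(ℓ j) * t ^ (-(α j))))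

/-- `Γ^μ₁(x,t)`. -/
noncomputable def Gam1 (n : ℕ) (α lam : Fin (n + 1) → ℝ) (μ x t : ℝ) : ℝ :=
  (4 * Real.pi) ^ (-(1/2 : ℝ)) *
    ∫ p in Set.Ioi (0:ℝ),
      p ^ (-(1/2 : ℝ)) * Real.exp (-(|x| ^ 2) / (4 * p)) *
        Sconv n μ α (fun j => lam j * p) t

/-- The kernel `E(x,t) = Γ⁰₁(x,t)`. -/
noncomputable def kerE (n : ℕ) (α lam : Fin (n + 1) → ℝ) (x t : ℝ) : ℝ :=
  Gam1 n α lam 0 x t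

/-- `E_x`, the spatial derivative of `E`. -/
noncomputable def kerEx (n : ℕ) (α lam : Fin (n + 1) → ℝ) (x t : ℝ) : ℝ :=
  deriv (fun y => kerE n α lam y t) x

/-- `E_xx`, the second spatial derivative of `E`. -/
noncomputable def kerExx (n : ℕ) (α lam : Fin (n + 1) → ℝ) (x t : ℝ) : ℝ :=
  deriv (fun y => kerEx n α lam y t) x

/-- The kernel `Z(x,t) = ∑ₖ λₖ Γ^{1-αₖ}₁(x,t)`. -/
noncomputable def kerZ (n : ℕ) (α lam : Fin (n + 1) → ℝ) (x t : ℝ) : ℝ :=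
  ∑ k : Fin (n + 1), lam k * Gam1 n α lam (1 - α k) x t

/-- `Z_x`, the spatial derivative of `Z`. -/
noncomputable def kerZx (n : ℕ) (α lam : Fin (n + 1) → ℝ) (x t : ℝ) : ℝ :=
  deriv (fun y => kerZ n α lam y t) x

/-- `Z_xx`, the second spatial derivative of `Z`. -/
noncomputable def kerZxx (n : ℕ) (α lam : Fin (n + 1) → ℝ) (x t : ℝ) : ℝ :=
  deriv (fun y => kerZx n α lam y t) x

/-!
Collapse the Hankel contour of the Wright function onto a ray on which both exponentials decay.
This gives `|W(-z; -α, 0)| ≤ C φ(z)` for `z > 0`, where `φ(z) = z / (1 + z²)`.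
On a bounded time interval, Laplace convolution preserves the resulting majorants
`t⁻¹ φ(p t ^ (-a))` of the factors, the larger exponent winning, because such a majorant has the
bounded primitive `a⁻¹ arctan (t ^ a / p)`. Hence `S` is dominated by `t⁻¹ φ(p t ^ (-α_m))`.

The derivative of `exp (-x² / (4 p))` is Lipschitz with constant `1 / (2 p)`, so `E_x(·, t)` is
Lipschitz with constant of order `∫ p ^ (-3/2) |S| dp`, which scales as `t ^ (-1 - α_m / 2)`.
Along the boundary the integrand is therefore at most a multiple of `(t - τ) ^ (β - α_m / 2 - 1)`.
-/

/-! ### Decay of the Wright function -/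

theorem integrableOn_rpow_mul_exp_neg {a c : ℝ} (ha : -1 < a) (hc : 0 < c) :
    IntegrableOn (fun ρ : ℝ => ρ ^ a * exp (-(c * ρ))) (Ioi 0) := by
  simpa [neg_mul] using integrableOn_rpow_mul_exp_neg_mul_rpow ha one_pos hc

theorem norm_cexp_neg_mul_ofReal (r : ℂ) (ρ : ℝ) :
    ‖Complex.exp (-(r * ρ))‖ = exp (-(r.re * ρ)) := by
  simp [Complex.norm_exp]

theorem eqOn_re_pos_of_eq_ofReal {f g : ℂ → ℂ} (hf : DifferentiableOn ℂ f {z | 0 < z.re})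
    (hg : DifferentiableOn ℂ g {z | 0 < z.re}) (hfg : ∀ x : ℝ, 0 < x → f x = g x) :
    EqOn f g {z | 0 < z.re} := by
  have hopen : IsOpen {z : ℂ | 0 < z.re} := isOpen_lt continuous_const Complex.continuous_re
  refine (hf.analyticOnNhd hopen).eqOn_of_preconnected_of_frequently_eq (hg.analyticOnNhd hopen)
    (convex_halfSpace_re_gt 0).isPreconnected (z₀ := ((1 : ℝ) : ℂ)) (by simp) ?_
  have hreal : Tendsto ((↑) : ℝ → ℂ) (𝓝[>] 1) (𝓝[≠] ((1 : ℝ) : ℂ)) :=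
    tendsto_nhdsWithin_of_tendsto_nhds_of_eventually_within _
      (Complex.continuous_ofReal.continuousAt.tendsto.mono_left nhdsWithin_le_nhds)
      (by filter_upwards [self_mem_nhdsWithin] with x hx
          simpa using (mem_Ioi.1 hx).ne')
  refine hreal.frequently (Eventually.frequently ?_)
  filter_upwards [self_mem_nhdsWithin] with x hx
  exact hfg x (one_pos.trans hx)

/-- The measure `ρ ^ a dρ` on `(0, ∞)`; its Laplace transform is a moment generating function. -/
noncomputable def rpowMeasure (a : ℝ) : Measure ℝ :=
  (volume.restrict (Ioi 0)).withDensity fun ρ => ENNReal.ofReal (ρ ^ a)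

theorem ae_toReal_rpow_density (a : ℝ) :
    ∀ᵐ ρ ∂volume.restrict (Ioi (0 : ℝ)), (ENNReal.ofReal (ρ ^ a)).toReal = ρ ^ a := by
  filter_upwards [ae_restrict_mem measurableSet_Ioi] with ρ hρ
  exact ENNReal.toReal_ofReal (rpow_nonneg (mem_Ioi.1 hρ).le a)

theorem integral_rpowMeasure {E : Type*} [NormedAddCommGroup E] [NormedSpace ℝ E] (a : ℝ)
    (f : ℝ → E) : ∫ ρ, f ρ ∂rpowMeasure a = ∫ ρ in Ioi 0, ρ ^ a • f ρ := by
  rw [rpowMeasure, integral_withDensity_eq_integral_toReal_smul (by fun_prop) (by simp)]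
  refine integral_congr_ae ?_
  filter_upwards [ae_toReal_rpow_density a] with ρ hρ
  rw [hρ]

theorem integrable_rpowMeasure_iff {E : Type*} [NormedAddCommGroup E] [NormedSpace ℝ E] {a : ℝ}
    {f : ℝ → E} :
    Integrable f (rpowMeasure a) ↔ IntegrableOn (fun ρ => ρ ^ a • f ρ) (Ioi 0) := by
  rw [rpowMeasure, integrable_withDensity_iff_integrable_smul' (by fun_prop) (by simp)]
  refine integrable_congr ?_
  filter_upwards [ae_toReal_rpow_density a] with ρ hρ
  rw [hρ]

theorem Iio_subset_integrableExpSet_rpowMeasure {a : ℝ} (ha : -1 < a) :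
    Iio 0 ⊆ ProbabilityTheory.integrableExpSet id (rpowMeasure a) := fun c hc =>
  integrable_rpowMeasure_iff.2 <| by
    simpa using integrableOn_rpow_mul_exp_neg ha (neg_pos.2 hc)

theorem differentiableOn_integral_rpow_mul_cexp {a : ℝ} (ha : -1 < a) :
    DifferentiableOn ℂ (fun r : ℂ => ∫ ρ in Ioi (0 : ℝ), ((ρ ^ a : ℝ) : ℂ) *
      Complex.exp (-(r * ρ))) {r | 0 < r.re} := by
  have hmgf : (fun r : ℂ => ∫ ρ in Ioi (0 : ℝ), ((ρ ^ a : ℝ) : ℂ) * Complex.exp (-(r * ρ))) =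
      fun r => ProbabilityTheory.complexMGF id (rpowMeasure a) (-r) := by
    ext r
    simp [ProbabilityTheory.complexMGF, integral_rpowMeasure]
  rw [hmgf]
  refine ProbabilityTheory.differentiableOn_complexMGF.comp differentiableOn_id.neg fun r hr => ?_
  refine interior_maximal (Iio_subset_integrableExpSet_rpowMeasure ha) isOpen_Iio ?_
  simpa using hr

theorem integral_rpow_mul_cexp {a : ℝ} (ha : -1 < a) {r : ℂ} (hr : 0 < r.re) :
    ∫ ρ in Ioi (0 : ℝ), ((ρ ^ a : ℝ) : ℂ) * Complex.exp (-(r * ρ)) =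
      r ^ (-(a + 1) : ℂ) * Gamma (a + 1) := by
  refine eqOn_re_pos_of_eq_ofReal (g := fun r => r ^ (-(a + 1) : ℂ) * Gamma (a + 1))
    (differentiableOn_integral_rpow_mul_cexp ha) (fun z hz => ?_) (fun x hx => ?_) hr
  · exact ((differentiableAt_id.cpow_const (Or.inl hz)).mul_const _).differentiableWithinAt
  · have hΓ := integral_rpow_mul_exp_neg_mul_Ioi (a := a + 1) (by linarith) hx
    rw [add_sub_cancel_right, one_div, inv_rpow hx.le, ← rpow_neg hx.le] at hΓ
    have h := congrArg ((↑) : ℝ → ℂ) hΓ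
    rw [← integral_complex_ofReal, Complex.ofReal_mul, Complex.ofReal_cpow hx.le] at h
    simpa using h

theorem integrableOn_exp_mul_rpow_mul_exp_neg {α c : ℝ} (hα₀ : 0 < α) (hα₁ : α < 1) (hc : 0 < c)
    (z : ℝ) : IntegrableOn (fun ρ : ℝ => exp (z * ρ ^ α) * exp (-(c * ρ))) (Ioi 0) := by
  refine integrable_of_isBigO_exp_neg (b := c / 2) (by positivity) (Continuous.continuousOn ?_) ?_
  · have := continuous_rpow_const hα₀.le
    fun_prop
  have hlim : Tendsto (fun ρ : ℝ => z * ρ ^ (-(1 - α))) atTop (𝓝 0) := by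
    simpa using (tendsto_rpow_neg_atTop (sub_pos.2 hα₁)).const_mul z
  refine Asymptotics.IsBigO.of_bound 1 ?_
  filter_upwards [hlim.eventually_le_const (half_pos hc), eventually_gt_atTop 0] with ρ hρ hρ₀
  rw [← exp_add, norm_of_nonneg (exp_pos _).le, norm_of_nonneg (exp_pos _).le, one_mul]
  have hsub : z * ρ ^ α = z * ρ ^ (-(1 - α)) * ρ := by
    rw [mul_assoc, ← rpow_add_one hρ₀.ne']
    ring_nf
  exact exp_le_exp.2 (by linarith [mul_le_mul_of_nonneg_right hρ hρ₀.le])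

/-- The Laplace transform at `r` of the stretched exponential `ρ ↦ exp (-v ρ ^ α)`. -/
noncomputable def stretchedLaplace (α : ℝ) (v r : ℂ) : ℂ :=
  ∫ ρ in Ioi (0 : ℝ), Complex.exp (-(v * ((ρ ^ α : ℝ) : ℂ))) * Complex.exp (-(r * ρ))

theorem hasSum_stretchedLaplace {α : ℝ} (hα₀ : 0 < α) (hα₁ : α < 1) (v : ℂ) {r : ℂ}
    (hr : 0 < r.re) :
    HasSum (fun k : ℕ => (-v) ^ k / (k.factorial : ℂ) *
        (r ^ (-((α * k : ℝ) + 1) : ℂ) * Gamma (α * k + 1))) (stretchedLaplace α v r) := by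
  have hinterchange := MeasureTheory.hasSum_integral_of_dominated_convergence
    (μ := volume.restrict (Ioi (0 : ℝ)))
    (F := fun (k : ℕ) (ρ : ℝ) => (-v) ^ k / (k.factorial : ℂ) *
      (((ρ ^ (α * k) : ℝ) : ℂ) * Complex.exp (-(r * ρ))))
    (f := fun ρ : ℝ => Complex.exp (-(v * ((ρ ^ α : ℝ) : ℂ))) * Complex.exp (-(r * ρ)))
    (fun k ρ => (‖v‖ * ρ ^ α) ^ k / (k.factorial : ℝ) * exp (-(r.re * ρ)))
    (fun k => Measurable.aestronglyMeasurable (by fun_prop)) ?_ ?_ ?_ ?_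
  · convert! hinterchange using 3 with k
    rw [MeasureTheory.integral_const_mul,
      integral_rpow_mul_cexp (neg_one_lt_zero.trans_le (by positivity)) hr]
  · intro k
    filter_upwards [ae_restrict_mem measurableSet_Ioi] with ρ hρ
    have hρ₀ : 0 ≤ ρ := (mem_Ioi.1 hρ).le
    rw [norm_mul, norm_mul, norm_cexp_neg_mul_ofReal, norm_div, norm_pow, norm_neg,
      Complex.norm_real, norm_of_nonneg (by positivity), Complex.norm_natCast, mul_pow,
      rpow_mul hρ₀, rpow_natCast]
    exact le_of_eq (by ring)
  · exact Eventually.of_forall fun ρ => (summable_pow_div_factorial _).mul_right _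
  · refine (integrableOn_exp_mul_rpow_mul_exp_neg hα₀ hα₁ hr ‖v‖).congr ?_
    filter_upwards with ρ
    rw [tsum_mul_right, exp_eq_exp_ℝ, (NormedSpace.expSeries_div_hasSum_exp _).tsum_eq]
  · filter_upwards [ae_restrict_mem measurableSet_Ioi] with ρ hρ
    have hexp := (NormedSpace.expSeries_div_hasSum_exp (-v * ((ρ ^ α : ℝ) : ℂ))).mul_right
      (Complex.exp (-(r * ρ)))
    rw [← Complex.exp_eq_exp_ℂ, neg_mul] at hexp
    convert! hexp using 2 with k
    rw [rpow_mul (mem_Ioi.1 hρ).le, rpow_natCast, ← neg_mul v, mul_pow]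
    push_cast
    ring

theorem norm_cexp_sub_one_le {z : ℂ} (hz : z.re ≤ 0) : ‖Complex.exp z - 1‖ ≤ ‖z‖ := by
  have hlip := (convex_halfSpace_re_le 0).norm_image_sub_le_of_norm_deriv_le (f := Complex.exp)
    (C := 1) (x := 0) (y := z) (fun _ _ => Complex.differentiableAt_exp)
    (fun w hw => by simpa [Complex.norm_exp] using hw) (by simp) (by simpa using hz)
  simpa using hlip

theorem integral_cexp_neg_mul {r : ℂ} (hr : 0 < r.re) :
    ∫ ρ in Ioi (0 : ℝ), Complex.exp (-(r * ρ)) = r⁻¹ := by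
  have h := integral_exp_mul_complex_Ioi (a := -r) (by simpa using hr) 0
  simpa [neg_mul, div_eq_mul_inv] using h

theorem norm_stretchedLaplace_sub_inv_le {α : ℝ} (hα : 0 ≤ α) {v r : ℂ} (hv : 0 ≤ v.re)
    (hr : 0 < r.re) :
    ‖stretchedLaplace α v r - r⁻¹‖ ≤ ‖v‖ * ∫ ρ in Ioi (0 : ℝ), ρ ^ α * exp (-(r.re * ρ)) := by
  have hint : IntegrableOn (fun ρ : ℝ => Complex.exp (-(r * ρ))) (Ioi 0) := by
    simpa [neg_mul] using integrableOn_exp_mul_complex_Ioi (a := -r) (by simpa using hr) 0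
  have hstretch : IntegrableOn (fun ρ : ℝ => Complex.exp (-(v * ((ρ ^ α : ℝ) : ℂ))) *
      Complex.exp (-(r * ρ))) (Ioi 0) := by
    refine hint.bdd_mul (c := 1) (Measurable.aestronglyMeasurable (by fun_prop)) ?_
    filter_upwards [ae_restrict_mem measurableSet_Ioi] with ρ hρ
    rw [norm_cexp_neg_mul_ofReal, exp_le_one_iff, neg_nonpos]
    exact mul_nonneg hv (rpow_nonneg (mem_Ioi.1 hρ).le α)
  rw [stretchedLaplace, ← integral_cexp_neg_mul hr, ← integral_sub hstretch hint,
    ← MeasureTheory.integral_const_mul]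
  refine norm_integral_le_of_norm_le
    ((integrableOn_rpow_mul_exp_neg (by linarith) hr).const_mul _) ?_
  filter_upwards [ae_restrict_mem measurableSet_Ioi] with ρ hρ
  have hρα : 0 ≤ ρ ^ α := rpow_nonneg (mem_Ioi.1 hρ).le α
  rw [← sub_one_mul, norm_mul, norm_cexp_neg_mul_ofReal, ← mul_assoc]
  gcongr
  refine (norm_cexp_sub_one_le ?_).trans_eq ?_
  · simpa using mul_nonneg hv hρα
  · rw [norm_neg, norm_mul, Complex.norm_real, norm_of_nonneg hρα]

theorem norm_stretchedLaplace_le {α : ℝ} (hα : α < 1) {v r : ℂ} (hv : 0 < v.re) (hr : 0 < r.re) :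
    ‖stretchedLaplace α v r‖ ≤
      v.re⁻¹ * ∫ ρ in Ioi (0 : ℝ), ρ ^ (-α) * exp (-(r.re * ρ)) := by
  rw [stretchedLaplace, ← MeasureTheory.integral_const_mul]
  refine norm_integral_le_of_norm_le
    ((integrableOn_rpow_mul_exp_neg (by linarith) hr).const_mul _) ?_
  filter_upwards [ae_restrict_mem measurableSet_Ioi] with ρ hρ
  have hρ₀ : 0 < ρ := hρ
  rw [norm_mul, norm_cexp_neg_mul_ofReal, norm_cexp_neg_mul_ofReal, ← mul_assoc]
  gcongr
  have : 0 < v.re * ρ ^ α := by positivity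
  rw [exp_neg, rpow_neg hρ₀.le, ← mul_inv]
  gcongr
  linarith [add_one_le_exp (v.re * ρ ^ α)]

theorem inv_Gamma_neg {x : ℝ} (hx : 0 ≤ x) :
    (Gamma (-x))⁻¹ = -(Gamma (x + 1) * sin (π * x) / π) := by
  have hΓ : Gamma (x + 1) ≠ 0 := (Gamma_pos_of_pos (by linarith)).ne'
  have hreflection := Gamma_mul_Gamma_one_sub (-x)
  rw [sub_neg_eq_add, add_comm 1 x] at hreflection
  rw [eq_div_of_mul_eq hΓ hreflection, mul_neg, sin_neg, inv_div, div_div_eq_mul_div]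
  ring

-- The Hankel contour of the Wright function, collapsed onto the ray at angle `θ` from the
-- negative half-axis.
theorem wrightW_zero_neg_eq {α θ : ℝ} (hα₀ : 0 < α) (hα₁ : α < 1) (hθ : |θ| < π / 2) (z : ℝ) :
    wrightW α 0 (-z) = -(1 / π) * (Complex.exp ((-θ : ℝ) * Complex.I) *
      stretchedLaplace α (z * Complex.exp ((α * (π - θ) : ℝ) * Complex.I))
        (Complex.exp ((-θ : ℝ) * Complex.I))).im := by
  set r := Complex.exp ((-θ : ℝ) * Complex.I) with hr
  set w := Complex.exp ((α * (π - θ) : ℝ) * Complex.I) with hw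
  have hθ' := abs_lt.1 hθ
  have hr_re : 0 < r.re := by
    rw [hr, Complex.exp_ofReal_mul_I_re, cos_neg]
    exact cos_pos_of_mem_Ioo ⟨by linarith, hθ'.2⟩
  have hlog : Complex.log r = (-θ : ℝ) * Complex.I :=
    Complex.log_exp (by simpa using by linarith) (by simpa using by linarith)
  have hsum := (Complex.hasSum_im ((hasSum_stretchedLaplace hα₀ hα₁ (z * w) hr_re).mul_left r)
    ).mul_left (-(1 / π))
  rw [← hsum.tsum_eq, wrightW]
  refine tsum_congr fun k => ?_
  have hphase : r * (w ^ k * r ^ (-((α * k : ℝ) + 1) : ℂ)) =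
      Complex.exp ((π * (α * k) : ℝ) * Complex.I) := by
    rw [Complex.cpow_def_of_ne_zero (Complex.exp_ne_zero _), hlog, hw, ← Complex.exp_nat_mul,
      hr, ← Complex.exp_add, ← Complex.exp_add]
    push_cast
    ring_nf
  have hterm : r * ((-(z * w)) ^ k / (k.factorial : ℂ) *
      (r ^ (-((α * k : ℝ) + 1) : ℂ) * Gamma (α * k + 1))) =
        (((-z) ^ k / (k.factorial : ℝ) * Gamma (α * k + 1) : ℝ) : ℂ) *
          Complex.exp ((π * (α * k) : ℝ) * Complex.I) := by
    rw [← hphase, ← neg_mul, mul_pow]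
    push_cast
    ring
  rw [hterm, Complex.im_ofReal_mul, Complex.exp_ofReal_mul_I_im, zero_sub, ← div_div,
    div_eq_mul_inv _ (Gamma _), inv_Gamma_neg (by positivity)]
  ring

/-- The profile `z / (1 + z²)`, comparable to `min z z⁻¹` on the positive half-line. -/
noncomputable def profile (z : ℝ) : ℝ := z / (1 + z ^ 2)

theorem profile_nonneg {z : ℝ} (hz : 0 ≤ z) : 0 ≤ profile z := by
  unfold profile
  positivity

theorem profile_le_one (z : ℝ) : profile z ≤ 1 := by
  rw [profile, div_le_one (by positivity)]
  nlinarith [sq_nonneg (z - 1)]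

theorem profile_le_self {z : ℝ} (hz : 0 ≤ z) : profile z ≤ z :=
  div_le_self hz (by nlinarith)

theorem profile_le_inv {z : ℝ} (hz : 0 < z) : profile z ≤ z⁻¹ := by
  rw [profile, inv_eq_one_div, div_le_div_iff₀ (by positivity) hz]
  nlinarith

theorem profile_mul_le {c z : ℝ} (hc : 0 < c) (hz : 0 ≤ z) :
    profile (c * z) ≤ (c + c⁻¹) * profile z := by
  have hdiff : 0 ≤ c⁻¹ * z + c ^ 3 * z ^ 3 := by positivity
  have hexpand : (c + c⁻¹) * z * (1 + (c * z) ^ 2) - c * z * (1 + z ^ 2) =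
      c⁻¹ * z + c ^ 3 * z ^ 3 := by
    field_simp
    ring
  rw [profile, profile, mul_div_assoc', div_le_div_iff₀ (by positivity) (by positivity)]
  linarith

theorem le_mul_profile {A B x z : ℝ} (hz : 0 < z) (hA : x ≤ A * z) (hB : x ≤ B * z⁻¹) :
    x ≤ (A + B) * profile z := by
  have hBz : x * z ^ 2 ≤ B * z := by
    calc x * z ^ 2 ≤ B * z⁻¹ * z ^ 2 := by gcongr
      _ = B * z := by field_simp
  rw [profile, mul_div_assoc', le_div_iff₀ (by positivity)]
  linarith

-- The multiple of `r⁻¹` contributes a real number to `r * stretchedLaplace α v r`.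
theorem abs_wrightW_zero_neg_le_norm {α θ : ℝ} (hα₀ : 0 < α) (hα₁ : α < 1) (hθ : |θ| < π / 2)
    (z c : ℝ) :
    |wrightW α 0 (-z)| ≤
      ‖stretchedLaplace α (z * Complex.exp ((α * (π - θ) : ℝ) * Complex.I))
        (Complex.exp ((-θ : ℝ) * Complex.I)) - c * (Complex.exp ((-θ : ℝ) * Complex.I))⁻¹‖ := by
  rw [wrightW_zero_neg_eq hα₀ hα₁ hθ]
  set r := Complex.exp ((-θ : ℝ) * Complex.I)
  set J := stretchedLaplace α (z * Complex.exp ((α * (π - θ) : ℝ) * Complex.I)) r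
  have hr : r ≠ 0 := Complex.exp_ne_zero _
  have hr_norm : ‖r‖ = 1 := Complex.norm_exp_ofReal_mul_I _
  have him : (r * (J - c * r⁻¹)).im = (r * J).im := by
    rw [mul_sub, mul_left_comm, mul_inv_cancel₀ hr, mul_one, Complex.sub_im, Complex.ofReal_im,
      sub_zero]
  have hπ : |-(1 / π)| ≤ 1 := by
    rw [abs_neg, abs_of_pos (by positivity), div_le_one pi_pos]
    linarith [pi_gt_three]
  calc |-(1 / π) * (r * J).im| ≤ 1 * ‖r * (J - c * r⁻¹)‖ := by
        rw [abs_mul, ← him]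
        exact mul_le_mul hπ (Complex.abs_im_le_norm _) (abs_nonneg _) zero_le_one
    _ = ‖J - c * r⁻¹‖ := by rw [one_mul, norm_mul, hr_norm, one_mul]

theorem exists_mul_pi_sub_eq_self {α : ℝ} (hα₀ : 0 < α) (hα₁ : α < 1) :
    ∃ θ ∈ Ioo 0 (π / 2), α * (π - θ) = θ := by
  refine ⟨π * α / (1 + α), ⟨by positivity, ?_⟩, ?_⟩
  · rw [div_lt_div_iff₀ (by positivity) two_pos]
    nlinarith [pi_pos]
  · field_simp
    ring

-- For the angle `θ` with `α (π - θ) = θ` both exponentials in the integral representation decay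
-- along the ray.
theorem exists_abs_wrightW_zero_neg_le {α : ℝ} (hα₀ : 0 < α) (hα₁ : α < 1) :
    ∃ C, 0 ≤ C ∧ ∀ z, 0 < z → |wrightW α 0 (-z)| ≤ C * profile z := by
  obtain ⟨θ, ⟨hθ₀, hθ₁⟩, hphase⟩ := exists_mul_pi_sub_eq_self hα₀ hα₁
  have hW := abs_wrightW_zero_neg_le_norm hα₀ hα₁ (abs_lt.2 ⟨by linarith, hθ₁⟩ : |θ| < π / 2)
  rw [hphase] at hW
  have hcos : 0 < cos θ := cos_pos_of_mem_Ioo ⟨by linarith, hθ₁⟩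
  set r := Complex.exp ((-θ : ℝ) * Complex.I)
  set w := Complex.exp ((θ : ℝ) * Complex.I)
  have hr : 0 < r.re := by rwa [Complex.exp_ofReal_mul_I_re, cos_neg]
  have hw_norm : ‖w‖ = 1 := Complex.norm_exp_ofReal_mul_I θ
  have hw_re (z : ℝ) : (z * w).re = z * cos θ := by
    rw [Complex.re_ofReal_mul, Complex.exp_ofReal_mul_I_re]
  set A := ∫ ρ in Ioi (0 : ℝ), ρ ^ α * exp (-(r.re * ρ))
  set B := ∫ ρ in Ioi (0 : ℝ), ρ ^ (-α) * exp (-(r.re * ρ))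
  have hA : 0 ≤ A := setIntegral_nonneg measurableSet_Ioi fun ρ hρ =>
    mul_nonneg (rpow_nonneg (mem_Ioi.1 hρ).le α) (exp_pos _).le
  have hB : 0 ≤ B := setIntegral_nonneg measurableSet_Ioi fun ρ hρ =>
    mul_nonneg (rpow_nonneg (mem_Ioi.1 hρ).le (-α)) (exp_pos _).le
  refine ⟨A + (cos θ)⁻¹ * B, by positivity, fun z hz => le_mul_profile hz ?_ ?_⟩
  · calc |wrightW α 0 (-z)| ≤ ‖stretchedLaplace α (z * w) r - r⁻¹‖ := by
          simpa only [Complex.ofReal_one, one_mul] using hW z 1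
      _ ≤ ‖z * w‖ * A :=
          norm_stretchedLaplace_sub_inv_le hα₀.le (by rw [hw_re]; positivity) hr
      _ = A * z := by
          rw [norm_mul, hw_norm, mul_one, Complex.norm_real, norm_of_nonneg hz.le, mul_comm]
  · calc |wrightW α 0 (-z)| ≤ ‖stretchedLaplace α (z * w) r‖ := by
          simpa only [Complex.ofReal_zero, zero_mul, sub_zero] using hW z 0
      _ ≤ (z * w).re⁻¹ * B := norm_stretchedLaplace_le hα₁ (by rw [hw_re]; positivity) hr
      _ = (cos θ)⁻¹ * B * z⁻¹ := by
          rw [hw_re, mul_inv]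
          ring

/-! ### Laplace convolution -/

/-- The majorant `t⁻¹ φ(p t ^ (-a))` of the Wright kernel of order `a`, where `φ` is `profile`. -/
noncomputable def majorant (a p t : ℝ) : ℝ := t⁻¹ * profile (p * t ^ (-a))

theorem majorant_nonneg {a p t : ℝ} (hp : 0 ≤ p) (ht : 0 ≤ t) : 0 ≤ majorant a p t :=
  mul_nonneg (inv_nonneg.2 ht) (profile_nonneg (by positivity))

theorem hasDerivAt_arctan_rpow_div {a p t : ℝ} (ha : 0 < a) (hp : 0 < p) (ht : 0 < t) :
    HasDerivAt (fun τ : ℝ => a⁻¹ * arctan (τ ^ a / p)) (majorant a p t) t := by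
  refine ((((hasDerivAt_rpow_const (p := a) (Or.inl ht.ne')).div_const p).arctan).const_mul
    a⁻¹).congr_deriv ?_
  rw [majorant, profile, rpow_neg ht.le, rpow_sub_one ht.ne']
  field_simp
  ring

theorem continuous_arctan_rpow_div {a p : ℝ} (ha : 0 ≤ a) :
    Continuous fun τ : ℝ => a⁻¹ * arctan (τ ^ a / p) :=
  continuous_const.mul (continuous_arctan.comp ((continuous_rpow_const ha).div_const p))

theorem intervalIntegrable_majorant {a p t : ℝ} (ha : 0 < a) (hp : 0 < p) (ht : 0 ≤ t) :
    IntervalIntegrable (majorant a p) volume 0 t := by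
  refine intervalIntegrable_deriv_of_nonneg (continuous_arctan_rpow_div ha.le).continuousOn
    (fun τ hτ => hasDerivAt_arctan_rpow_div ha hp ?_) (fun τ hτ => majorant_nonneg hp.le ?_)
  · exact (le_min le_rfl ht).trans_lt hτ.1
  · exact (le_min le_rfl ht).trans hτ.1.le

theorem integral_majorant {a p t : ℝ} (ha : 0 < a) (hp : 0 < p) (ht : 0 ≤ t) :
    ∫ τ in (0 : ℝ)..t, majorant a p τ = a⁻¹ * arctan (t ^ a / p) := by
  rw [integral_eq_sub_of_hasDerivAt_of_le ht (continuous_arctan_rpow_div ha.le).continuousOn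
    (fun τ hτ => hasDerivAt_arctan_rpow_div ha hp hτ.1) (intervalIntegrable_majorant ha hp ht)]
  simp [zero_rpow ha.ne']

theorem majorant_le_of_half_le {a p t τ : ℝ} (ha : 0 ≤ a) (ha₁ : a ≤ 1) (hp : 0 ≤ p) (hτ : 0 < τ)
    (hτt : τ ≤ t) (hhalf : t / 2 ≤ τ) : majorant a p τ ≤ 6 * majorant a p t := by
  have ht : 0 < t := hτ.trans_le hτt
  set c : ℝ := (t / τ) ^ a with hc
  have hratio : t / τ ≤ 2 := by
    rw [div_le_iff₀ hτ]
    linarith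
  have hc₁ : 1 ≤ c := one_le_rpow ((one_le_div hτ).2 hτt) ha
  have hc₂ : c ≤ 2 := by
    calc c ≤ (t / τ) ^ (1 : ℝ) := rpow_le_rpow_of_exponent_le ((one_le_div hτ).2 hτt) ha₁
      _ ≤ 2 := by rwa [rpow_one]
  have harg : p * τ ^ (-a) = c * (p * t ^ (-a)) := by
    rw [hc, div_rpow ht.le hτ.le, rpow_neg hτ.le, rpow_neg ht.le]
    have : t ^ a ≠ 0 := by positivity
    field_simp
  have hprofile : 0 ≤ profile (p * t ^ (-a)) := profile_nonneg (by positivity)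
  have hinv : τ⁻¹ ≤ 2 * t⁻¹ := by
    rw [← div_eq_mul_inv, inv_eq_one_div, div_le_div_iff₀ hτ ht]
    linarith
  calc majorant a p τ = τ⁻¹ * profile (c * (p * t ^ (-a))) := by rw [majorant, harg]
    _ ≤ (2 * t⁻¹) * ((c + c⁻¹) * profile (p * t ^ (-a))) := by
        gcongr
        · exact profile_nonneg (by positivity)
        · exact profile_mul_le (by linarith) (by positivity)
    _ ≤ (2 * t⁻¹) * (3 * profile (p * t ^ (-a))) := by
        gcongr
        linarith [inv_le_one_of_one_le₀ hc₁]
    _ = 6 * majorant a p t := by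
        rw [majorant]
        ring

-- One of `τ`, `t - τ` is at least `t / 2`, where the corresponding majorant is comparable to its
-- value at `t`.
theorem majorant_mul_majorant_le {a b p t τ : ℝ} (ha : a ∈ Icc 0 1) (hb : b ∈ Icc 0 1) (hp : 0 ≤ p)
    (hτ : τ ∈ Ioo 0 t) :
    majorant a p τ * majorant b p (t - τ) ≤
      6 * (majorant a p t * majorant b p (t - τ) + majorant b p t * majorant a p τ) := by
  have hsub : 0 < t - τ := sub_pos.2 hτ.2
  have ht : 0 ≤ t := (hτ.1.trans hτ.2).le
  have hat := mul_nonneg (majorant_nonneg (a := a) hp ht) (majorant_nonneg (a := b) hp hsub.le)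
  have hbt := mul_nonneg (majorant_nonneg (a := b) hp ht) (majorant_nonneg (a := a) hp hτ.1.le)
  rcases le_total (t / 2) τ with h | h
  · have hle := mul_le_mul_of_nonneg_right (majorant_le_of_half_le ha.1 ha.2 hp hτ.1 hτ.2.le h)
      (majorant_nonneg (a := b) hp hsub.le)
    linarith
  · have hle := mul_le_mul_of_nonneg_left (majorant_le_of_half_le (t := t) hb.1 hb.2 hp hsub
      (by linarith [hτ.1]) (by linarith)) (majorant_nonneg (a := a) hp hτ.1.le)
    linarith

theorem arctan_le_self {x : ℝ} (hx : 0 ≤ x) : arctan x ≤ x := by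
  simpa only [tan_arctan] using le_tan (arctan_nonneg.2 hx) (arctan_lt_pi_div_two x)

theorem arctan_le_two (x : ℝ) : arctan x ≤ 2 := by
  linarith [arctan_lt_pi_div_two x, pi_le_four]

theorem majorant_mul_arctan_le_of_le {a b p t T : ℝ} (hab : a ≤ b) (hp : 0 < p) (ht : 0 < t)
    (htT : t ≤ T) :
    majorant a p t * arctan (t ^ b / p) ≤ (2 * T ^ (b - a) + 1) * majorant b p t := by
  set z : ℝ := p * t ^ (-b) with hz
  set y : ℝ := p * t ^ (-a) with hy
  have hz₀ : 0 < z := by positivity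
  have hy₀ : 0 ≤ y := by positivity
  have hyz : y ≤ T ^ (b - a) * z := by
    calc y = t ^ (b - a) * z := by
          rw [hy, hz, mul_left_comm, ← rpow_add ht]
          ring_nf
      _ ≤ T ^ (b - a) * z := by gcongr
  have harg : t ^ b / p = z⁻¹ := by
    rw [hz, rpow_neg ht.le]
    field_simp
  have harctan : 0 ≤ arctan z⁻¹ := arctan_nonneg.2 (by positivity)
  have hprofile : profile y * arctan z⁻¹ ≤ (2 * T ^ (b - a) + 1) * profile z := by
    refine le_mul_profile hz₀ ?_ ?_
    · calc profile y * arctan z⁻¹ ≤ (T ^ (b - a) * z) * 2 :=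
            mul_le_mul ((profile_le_self hy₀).trans hyz) (arctan_le_two _) harctan (hy₀.trans hyz)
        _ = 2 * T ^ (b - a) * z := by ring
    · exact mul_le_mul (profile_le_one y) (arctan_le_self (by positivity)) harctan zero_le_one
  calc majorant a p t * arctan (t ^ b / p) = t⁻¹ * (profile y * arctan z⁻¹) := by
        rw [majorant, harg, mul_assoc]
    _ ≤ t⁻¹ * ((2 * T ^ (b - a) + 1) * profile z) := by gcongr
    _ = (2 * T ^ (b - a) + 1) * majorant b p t := by rw [majorant, mul_left_comm]

theorem majorant_mul_arctan_le {p t T : ℝ} (a b : ℝ) (hp : 0 < p) (ht : 0 < t) (htT : t ≤ T) :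
    majorant a p t * arctan (t ^ b / p) ≤ (2 * T ^ |b - a| + 2) * majorant (max a b) p t := by
  have hT : 0 < T := ht.trans_le htT
  rcases le_total a b with hab | hab
  · rw [abs_of_nonneg (sub_nonneg.2 hab), max_eq_right hab]
    refine (majorant_mul_arctan_le_of_le hab hp ht htT).trans ?_
    gcongr
    · exact majorant_nonneg hp.le ht.le
    · norm_num
  · have hmaj := majorant_nonneg (a := a) hp.le ht.le
    rw [max_eq_left hab, mul_comm]
    gcongr
    linarith [arctan_le_two (t ^ b / p), rpow_pos_of_pos hT |b - a|]

theorem intervalIntegrable_majorant_sub {b p t : ℝ} (hb : 0 < b) (hp : 0 < p) (ht : 0 ≤ t) :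
    IntervalIntegrable (fun τ => majorant b p (t - τ)) volume 0 t := by
  simpa using ((intervalIntegrable_majorant hb hp ht).comp_sub_left t).symm

theorem integral_majorant_symm_sum_le {a b p t T : ℝ} (ha : 0 < a) (hb : 0 < b) (hp : 0 < p)
    (ht : 0 < t) (htT : t ≤ T) :
    ∫ τ in (0 : ℝ)..t, (majorant a p t * majorant b p (t - τ) + majorant b p t * majorant a p τ) ≤
      (a⁻¹ + b⁻¹) * (2 * T ^ |b - a| + 2) * majorant (max a b) p t := by
  have hab := majorant_mul_arctan_le a b hp ht htT
  have hba := majorant_mul_arctan_le b a hp ht htT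
  rw [abs_sub_comm, max_comm] at hba
  rw [intervalIntegral.integral_add ((intervalIntegrable_majorant_sub hb hp ht.le).const_mul _)
    ((intervalIntegrable_majorant ha hp ht.le).const_mul _), intervalIntegral.integral_const_mul,
    intervalIntegral.integral_const_mul,
    intervalIntegral.integral_comp_sub_left (fun τ => majorant b p τ) t, sub_self, sub_zero,
    integral_majorant ha hp ht.le, integral_majorant hb hp ht.le]
  calc _ = b⁻¹ * (majorant a p t * arctan (t ^ b / p)) +
        a⁻¹ * (majorant b p t * arctan (t ^ a / p)) := by ring
    _ ≤ b⁻¹ * ((2 * T ^ |b - a| + 2) * majorant (max a b) p t) +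
        a⁻¹ * ((2 * T ^ |b - a| + 2) * majorant (max a b) p t) := by gcongr
    _ = _ := by ring

theorem abs_laplaceConv_le {f g : ℝ → ℝ} {a b p t T A B : ℝ} (ha : a ∈ Ioc 0 1) (hb : b ∈ Ioc 0 1)
    (hp : 0 < p) (ht : t ∈ Ioc 0 T) (hA : 0 ≤ A) (hB : 0 ≤ B)
    (hf : ∀ τ ∈ Ioc 0 T, |f τ| ≤ A * majorant a p τ)
    (hg : ∀ τ ∈ Ioc 0 T, |g τ| ≤ B * majorant b p τ) :
    |laplaceConv f g t| ≤
      A * B * 6 * ((a⁻¹ + b⁻¹) * (2 * T ^ |b - a| + 2)) * majorant (max a b) p t := by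
  obtain ⟨ht, htT⟩ := ht
  have hbound : ∀ᵐ τ : ℝ, τ ∈ Ioc 0 t → ‖f τ * g (t - τ)‖ ≤
      A * B * 6 * (majorant a p t * majorant b p (t - τ) + majorant b p t * majorant a p τ) := by
    filter_upwards [Measure.ae_ne volume t] with τ hne hτ
    have hsub : 0 < t - τ := sub_pos.2 (lt_of_le_of_ne hτ.2 hne)
    calc ‖f τ * g (t - τ)‖ = |f τ| * |g (t - τ)| := norm_mul _ _
      _ ≤ (A * majorant a p τ) * (B * majorant b p (t - τ)) :=
          mul_le_mul (hf τ ⟨hτ.1, hτ.2.trans htT⟩) (hg _ ⟨hsub, by linarith [hτ.1]⟩)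
            (abs_nonneg _) (mul_nonneg hA (majorant_nonneg hp.le hτ.1.le))
      _ = A * B * (majorant a p τ * majorant b p (t - τ)) := by ring
      _ ≤ A * B * (6 * (majorant a p t * majorant b p (t - τ) +
            majorant b p t * majorant a p τ)) := by
          refine mul_le_mul_of_nonneg_left ?_ (mul_nonneg hA hB)
          exact majorant_mul_majorant_le ⟨ha.1.le, ha.2⟩ ⟨hb.1.le, hb.2⟩ hp.le
            ⟨hτ.1, sub_pos.1 hsub⟩
      _ = _ := by ring
  have hint := intervalIntegral.norm_integral_le_of_norm_le ht.le hbound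
    ((((intervalIntegrable_majorant_sub hb.1 hp ht.le).const_mul _).add
      ((intervalIntegrable_majorant ha.1 hp ht.le).const_mul _)).const_mul _)
  rw [intervalIntegral.integral_const_mul] at hint
  refine hint.trans ?_
  rw [mul_assoc (A * B * 6)]
  gcongr
  exact integral_majorant_symm_sum_le ha.1 hb.1 hp ht htT

theorem exists_abs_iterConv_le {T : ℝ} (hT : 0 ≤ T) (n : ℕ) {α C : Fin (n + 1) → ℝ}
    {k : Fin (n + 1)} (hk : ∀ j, α j ≤ α k) (hα : ∀ j, α j ∈ Ioc 0 1) (hC : ∀ j, 0 ≤ C j) :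
    ∃ D, 0 ≤ D ∧ ∀ (p : ℝ) (h : Fin (n + 1) → ℝ → ℝ), 0 < p →
      (∀ j, ∀ t ∈ Ioc 0 T, |h j t| ≤ C j * majorant (α j) p t) →
      ∀ t ∈ Ioc 0 T, |iterConv n h t| ≤ D * majorant (α k) p t := by
  induction n with
  | zero =>
    obtain rfl := Fin.fin_one_eq_zero k
    exact ⟨C 0, hC 0, fun p h _ hh => hh 0⟩
  | succ n ih =>
    obtain ⟨i, hi⟩ := Finite.exists_max fun i : Fin (n + 1) => α i.castSucc
    obtain ⟨D, hD, hbound⟩ := ih hi (fun i => hα i.castSucc) (fun i => hC i.castSucc)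
    set l := Fin.last (n + 1)
    have hmax : α k = max (α i.castSucc) (α l) := by
      refine le_antisymm ?_ (max_le (hk _) (hk _))
      induction k using Fin.lastCases with
      | last => exact le_max_right _ _
      | cast j => exact le_max_of_le_left (hi j)
    have hi₀ := (hα i.castSucc).1
    have hl₀ := (hα l).1
    have hCl := hC l
    refine ⟨D * C l * 6 * (((α i.castSucc)⁻¹ + (α l)⁻¹) * (2 * T ^ |α l - α i.castSucc| + 2)),
      by positivity, fun p h hp hh t ht => ?_⟩
    rw [hmax]
    exact abs_laplaceConv_le (hα _) (hα _) hp ht hD hCl (hbound p _ hp fun i => hh i.castSucc)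
      (hh l)

theorem exists_abs_wrightKernel_le {α l : ℝ} (hα₀ : 0 < α) (hα₁ : α < 1) (hl : 0 < l) :
    ∃ C, 0 ≤ C ∧ ∀ p t, 0 < p → 0 < t →
      |t ^ (-1 : ℝ) * wrightW α 0 (-(l * p) * t ^ (-α))| ≤ C * majorant α p t := by
  obtain ⟨C, hC, hbound⟩ := exists_abs_wrightW_zero_neg_le hα₀ hα₁
  refine ⟨C * (l + l⁻¹), by positivity, fun p t hp ht => ?_⟩
  have hz : 0 < p * t ^ (-α) := by positivity
  calc |t ^ (-1 : ℝ) * wrightW α 0 (-(l * p) * t ^ (-α))|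
      = t⁻¹ * |wrightW α 0 (-(l * (p * t ^ (-α))))| := by
        rw [rpow_neg_one, abs_mul, abs_of_pos (inv_pos.2 ht), neg_mul, mul_assoc]
    _ ≤ t⁻¹ * (C * ((l + l⁻¹) * profile (p * t ^ (-α)))) := by
        gcongr
        exact (hbound _ (by positivity)).trans (by gcongr; exact profile_mul_le hl hz.le)
    _ = C * (l + l⁻¹) * majorant α p t := by
        rw [majorant]
        ring

theorem exists_abs_Sconv_le {T : ℝ} (hT : 0 ≤ T) {m : ℕ} {α lam : Fin (m + 1) → ℝ}
    {k : Fin (m + 1)} (hk : ∀ j, α j ≤ α k) (hpos : ∀ j, 0 < α j) (hlt1 : ∀ j, α j < 1)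
    (hlam : ∀ j, 0 < lam j) :
    ∃ C, 0 ≤ C ∧ ∀ p, 0 < p → ∀ t ∈ Ioc 0 T,
      |Sconv m 0 α (fun j => lam j * p) t| ≤ C * majorant (α k) p t := by
  choose C hC hkernel using fun j => exists_abs_wrightKernel_le (hpos j) (hlt1 j) (hlam j)
  obtain ⟨D, hD, hbound⟩ := exists_abs_iterConv_le hT m hk (fun j => ⟨hpos j, (hlt1 j).le⟩) hC
  refine ⟨D, hD, fun p hp t ht => hbound p _ hp (fun j τ hτ => ?_) t ht⟩
  simpa only [ite_self, zero_sub] using hkernel j p τ hp hτ.1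

theorem measurable_wrightW (β δ : ℝ) : Measurable (wrightW β δ) := by
  unfold wrightW
  fun_prop

theorem measurable_intervalIntegral {X : Type*} [MeasurableSpace X] {a b : X → ℝ} {F : X → ℝ → ℝ}
    (ha : Measurable a) (hb : Measurable b) (hF : Measurable (Function.uncurry F)) :
    Measurable fun x => ∫ τ in a x..b x, F x τ := by
  have hset {c d : X → ℝ} (hc : Measurable c) (hd : Measurable d) :
      Measurable fun x => ∫ τ in Ioc (c x) (d x), F x τ := by
    have hS : MeasurableSet {q : X × ℝ | q.2 ∈ Ioc (c q.1) (d q.1)} :=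
      (measurableSet_lt (hc.comp measurable_fst) measurable_snd).inter
        (measurableSet_le measurable_snd (hd.comp measurable_fst))
    have hint := (hF.indicator hS).stronglyMeasurable.integral_prod_right' (ν := volume)
    convert! hint.measurable using 2 with x
    rw [← MeasureTheory.integral_indicator measurableSet_Ioc]
    rfl
  exact (hset ha hb).sub (hset hb ha)

theorem measurable_laplaceConv {P : Type*} [MeasurableSpace P] {f g : P → ℝ → ℝ}
    (hf : Measurable (Function.uncurry f)) (hg : Measurable (Function.uncurry g)) :
    Measurable (Function.uncurry fun p => laplaceConv (f p) (g p)) := by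
  refine measurable_intervalIntegral (X := P × ℝ) measurable_const measurable_snd ?_
  exact (hf.comp (by fun_prop : Measurable fun q : (P × ℝ) × ℝ => (q.1.1, q.2))).mul
    (hg.comp (by fun_prop : Measurable fun q : (P × ℝ) × ℝ => (q.1.1, q.1.2 - q.2)))

theorem measurable_iterConv {P : Type*} [MeasurableSpace P] (n : ℕ)
    {h : P → Fin (n + 1) → ℝ → ℝ} (hh : ∀ j, Measurable (Function.uncurry fun p => h p j)) :
    Measurable (Function.uncurry fun p => iterConv n (h p)) := by
  induction n with
  | zero => exact hh 0
  | succ n ih => exact measurable_laplaceConv (ih fun i => hh i.castSucc) (hh _)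

theorem measurable_Sconv {m : ℕ} (μ : ℝ) (α lam : Fin (m + 1) → ℝ) (t : ℝ) :
    Measurable fun p => Sconv m μ α (fun j => lam j * p) t := by
  unfold Sconv
  refine (measurable_iterConv m fun j => ?_).of_uncurry_right (y := t)
  exact (by fun_prop : Measurable fun q : ℝ × ℝ => q.2 ^ ((if j = 0 then μ else 0) - 1)).mul
    ((measurable_wrightW _ _).comp (by fun_prop))

/-! ### Gaussian mixtures -/

theorem integrableOn_rpow_mul_profile {a b : ℝ} (ha : -2 < a) (ha₀ : a < 0) (hb : 0 < b) :
    IntegrableOn (fun q => q ^ a * profile (q * b)) (Ioi 0) := by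
  have hmeas : Measurable fun q : ℝ => q ^ a * profile (q * b) := by
    unfold profile
    fun_prop
  have hnear : IntegrableOn (fun q => b * q ^ (a + 1)) (Ioc 0 1) :=
    ((intervalIntegrable_rpow' (by linarith)).1).const_mul b
  have hfar : IntegrableOn (fun q => b⁻¹ * q ^ (a - 1)) (Ioi 1) :=
    (integrableOn_Ioi_rpow_of_lt (by linarith) one_pos).const_mul b⁻¹
  rw [← Ioc_union_Ioi_eq_Ioi zero_le_one]
  refine IntegrableOn.union (hnear.mono' hmeas.aestronglyMeasurable ?_)
    (hfar.mono' hmeas.aestronglyMeasurable ?_)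
  · filter_upwards [ae_restrict_mem measurableSet_Ioc] with q hq
    have hq₀ : 0 < q := hq.1
    have hprofile := profile_nonneg (mul_pos hq₀ hb).le
    rw [norm_of_nonneg (by positivity), rpow_add_one hq₀.ne']
    calc q ^ a * profile (q * b) ≤ q ^ a * (q * b) := by
          gcongr
          exact profile_le_self (by positivity)
      _ = b * (q ^ a * q) := by ring
  · filter_upwards [ae_restrict_mem measurableSet_Ioi] with q hq
    have hq₀ : 0 < q := one_pos.trans hq
    have hprofile := profile_nonneg (mul_pos hq₀ hb).le
    rw [norm_of_nonneg (by positivity), rpow_sub_one hq₀.ne']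
    calc q ^ a * profile (q * b) ≤ q ^ a * (q * b)⁻¹ := by
          gcongr
          exact profile_le_inv (by positivity)
      _ = b⁻¹ * (q ^ a / q) := by
          rw [mul_inv]
          ring

theorem integral_rpow_mul_profile_comp_mul (a : ℝ) {b : ℝ} (hb : 0 < b) :
    ∫ q in Ioi (0 : ℝ), q ^ a * profile (q * b) =
      b ^ (-a - 1) * ∫ q in Ioi (0 : ℝ), q ^ a * profile q := by
  have hscale := integral_comp_mul_right_Ioi (fun q => q ^ a * profile q) 0 hb
  rw [zero_mul, smul_eq_mul] at hscale
  have hpow : ∀ q ∈ Ioi (0 : ℝ), (q * b) ^ a * profile (q * b) =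
      b ^ a * (q ^ a * profile (q * b)) := fun q hq => by
    rw [mul_rpow (le_of_lt hq) hb.le]
    ring
  rw [setIntegral_congr_fun measurableSet_Ioi hpow, MeasureTheory.integral_const_mul] at hscale
  rw [rpow_sub_one hb.ne', rpow_neg hb.le, div_eq_mul_inv, mul_assoc, ← hscale,
    inv_mul_cancel_left₀ (by positivity)]

theorem norm_deriv_integral_sub_le {X E : Type*} [MeasurableSpace X] {μ : Measure X}
    [NormedAddCommGroup E] [NormedSpace ℝ E] {F F' : ℝ → X → E} {L : X → ℝ}
    (hF : ∀ x, Integrable (F x) μ) (hF' : ∀ x, Integrable (F' x) μ) (hL : Integrable L μ)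
    (hderiv : ∀ᵐ p ∂μ, ∀ x, HasDerivAt (F · p) (F' x p) x)
    (hlip : ∀ᵐ p ∂μ, ∀ x y, ‖F' x p - F' y p‖ ≤ L p * |x - y|) (x y : ℝ) :
    ‖deriv (fun x => ∫ p, F x p ∂μ) x - deriv (fun x => ∫ p, F x p ∂μ) y‖ ≤
      (∫ p, L p ∂μ) * |x - y| := by
  have hderiv_integral (x : ℝ) : deriv (fun x => ∫ p, F x p ∂μ) x = ∫ p, F' x p ∂μ := by
    refine (_root_.hasDerivAt_integral_of_dominated_loc_of_deriv_le
      (bound := fun p => ‖F' x p‖ + ‖L p‖) (Metric.ball_mem_nhds x one_pos)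
      (Eventually.of_forall fun x => (hF x).aestronglyMeasurable) (hF x)
      (hF' x).aestronglyMeasurable ?_ ((hF' x).norm.add hL.norm)
      (hderiv.mono fun p hp z _ => hp z)).2.deriv
    filter_upwards [hlip] with p hp z hz
    rw [Metric.mem_ball, Real.dist_eq] at hz
    have hclose : ‖F' z p - F' x p‖ ≤ ‖L p‖ := (hp z x).trans <|
      (mul_le_mul_of_nonneg_right (le_abs_self _) (abs_nonneg _)).trans
        (mul_le_of_le_one_right (abs_nonneg _) hz.le)
    exact (norm_le_norm_add_norm_sub' _ _).trans (by gcongr)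
  rw [hderiv_integral, hderiv_integral, ← MeasureTheory.integral_sub (hF' x) (hF' y),
    ← MeasureTheory.integral_mul_const]
  exact MeasureTheory.norm_integral_le_of_norm_le (hL.mul_const _) (hlip.mono fun p hp => hp x y)

theorem hasDerivAt_exp_neg_mul_sq (c x : ℝ) :
    HasDerivAt (fun y => exp (-(c * y ^ 2))) (exp (-(c * x ^ 2)) * -(2 * c * x)) x := by
  refine (((hasDerivAt_pow 2 x).const_mul c).neg).exp.congr_deriv ?_
  simp only [Pi.neg_apply, Nat.cast_ofNat]
  ring

theorem abs_deriv_exp_neg_mul_sq_sub_le {c : ℝ} (hc : 0 ≤ c) (x y : ℝ) :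
    |exp (-(c * x ^ 2)) * -(2 * c * x) - exp (-(c * y ^ 2)) * -(2 * c * y)| ≤
      2 * c * |x - y| := by
  have hsecond (z : ℝ) : HasDerivAt (fun z => exp (-(c * z ^ 2)) * -(2 * c * z))
      (2 * c * ((2 * (c * z ^ 2) - 1) / exp (c * z ^ 2))) z := by
    refine ((hasDerivAt_exp_neg_mul_sq c z).mul
      (((hasDerivAt_id z).const_mul (2 * c)).neg)).congr_deriv ?_
    simp only [Pi.neg_apply, id, exp_neg]
    ring
  refine Convex.norm_image_sub_le_of_norm_hasDerivWithin_le (s := univ)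
    (fun z _ => (hsecond z).hasDerivWithinAt) (fun z _ => ?_) convex_univ (mem_univ y) (mem_univ x)
  have hnonneg : 0 ≤ c * z ^ 2 := by positivity
  have hexp := quadratic_le_exp_of_nonneg hnonneg
  have hratio : |(2 * (c * z ^ 2) - 1) / exp (c * z ^ 2)| ≤ 1 := by
    rw [abs_div, Real.abs_exp, div_le_one (exp_pos _), abs_le]
    constructor <;> nlinarith [sq_nonneg (c * z ^ 2 - 1)]
  rw [norm_mul, norm_of_nonneg (by positivity : (0 : ℝ) ≤ 2 * c), Real.norm_eq_abs]
  exact mul_le_of_le_one_right (by positivity) hratio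

theorem abs_deriv_gaussianMixture_sub_le {X : Type*} [MeasurableSpace X] {μ : Measure X}
    {c w L : X → ℝ} (hc : ∀ᵐ p ∂μ, 0 ≤ c p) (hcm : AEMeasurable c μ) (hw : Integrable w μ)
    (hL : Integrable L μ) (hcw : ∀ᵐ p ∂μ, c p * |w p| ≤ L p) (x y : ℝ) :
    |deriv (fun x => ∫ p, exp (-(c p * x ^ 2)) * w p ∂μ) x -
      deriv (fun x => ∫ p, exp (-(c p * x ^ 2)) * w p ∂μ) y| ≤
      2 * (∫ p, L p ∂μ) * |x - y| := by
  have hexp (x : ℝ) : AEStronglyMeasurable (fun p => exp (-(c p * x ^ 2))) μ :=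
    (measurable_exp.comp_aemeasurable (hcm.mul_const _).neg).aestronglyMeasurable
  have hexp_le (x : ℝ) : ∀ᵐ p ∂μ, ‖exp (-(c p * x ^ 2))‖ ≤ 1 := hc.mono fun p hp => by
    rw [norm_of_nonneg (exp_pos _).le, exp_le_one_iff, neg_nonpos]
    positivity
  have hrate : Integrable (fun p => c p * w p) μ := by
    refine hL.mono' (hcm.aestronglyMeasurable.mul hw.aestronglyMeasurable) ?_
    filter_upwards [hc, hcw] with p hp hle
    rwa [norm_mul, norm_of_nonneg hp, Real.norm_eq_abs]
  rw [← MeasureTheory.integral_const_mul]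
  refine norm_deriv_integral_sub_le
    (F' := fun x p => exp (-(c p * x ^ 2)) * -(2 * c p * x) * w p)
    (fun x => hw.bdd_mul (hexp x) (hexp_le x)) (fun x => ?_) (hL.const_mul 2)
    (ae_of_all _ fun p x => (hasDerivAt_exp_neg_mul_sq (c p) x).mul_const (w p)) ?_ x y
  · convert (hrate.const_mul (-(2 * x))).bdd_mul (hexp x) (hexp_le x) using 2
    ring
  · filter_upwards [hc, hcw] with p hp hle x y
    rw [← sub_mul, norm_mul, Real.norm_eq_abs, Real.norm_eq_abs]
    calc _ ≤ 2 * c p * |x - y| * |w p| := by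
          gcongr
          exact abs_deriv_exp_neg_mul_sq_sub_le hp x y
      _ = 2 * (c p * |w p|) * |x - y| := by ring
      _ ≤ _ := by gcongr

theorem integrableOn_rpow_mul_of_abs_le_profile {S : ℝ → ℝ} {M a b : ℝ} (ha : -2 < a)
    (ha₀ : a < 0) (hb : 0 < b) (hmeas : AEStronglyMeasurable S (volume.restrict (Ioi 0)))
    (hS : ∀ p, 0 < p → |S p| ≤ M * profile (p * b)) :
    IntegrableOn (fun p => p ^ a * S p) (Ioi 0) := by
  have hpow : Measurable fun p : ℝ => p ^ a := by fun_prop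
  refine ((integrableOn_rpow_mul_profile ha ha₀ hb).const_mul M).mono'
    (hpow.aestronglyMeasurable.mul hmeas) ?_
  filter_upwards [ae_restrict_mem measurableSet_Ioi] with p hp
  have hpa : 0 ≤ p ^ a := rpow_nonneg (le_of_lt hp) a
  rw [norm_mul, norm_of_nonneg hpa, Real.norm_eq_abs, mul_left_comm]
  exact mul_le_mul_of_nonneg_left (hS p hp) hpa

theorem abs_deriv_heatMixture_sub_le {S : ℝ → ℝ} {M b : ℝ} (hb : 0 < b)
    (hmeas : AEStronglyMeasurable S (volume.restrict (Ioi 0)))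
    (hS : ∀ p, 0 < p → |S p| ≤ M * profile (p * b)) (x y : ℝ) :
    |deriv (fun x => ∫ p in Ioi (0 : ℝ),
        p ^ (-(1 / 2 : ℝ)) * exp (-(|x| ^ 2) / (4 * p)) * S p) x -
      deriv (fun x => ∫ p in Ioi (0 : ℝ),
        p ^ (-(1 / 2 : ℝ)) * exp (-(|x| ^ 2) / (4 * p)) * S p) y| ≤
      1 / 2 * M * (b ^ (1 / 2 : ℝ) * ∫ q in Ioi (0 : ℝ), q ^ (-(3 / 2) : ℝ) * profile q) *
        |x - y| := by
  have hrate : ∀ᵐ p ∂volume.restrict (Ioi (0 : ℝ)), (4 * p)⁻¹ * |p ^ (-(1 / 2 : ℝ)) * S p| ≤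
      4⁻¹ * (M * (p ^ (-(3 / 2) : ℝ) * profile (p * b))) := by
    filter_upwards [ae_restrict_mem measurableSet_Ioi] with p hp
    rw [abs_mul, abs_of_nonneg (rpow_nonneg (le_of_lt hp) _)]
    calc _ = 4⁻¹ * (p ^ (-(3 / 2) : ℝ) * |S p|) := by
          rw [show (-(3 / 2) : ℝ) = -(1 / 2) - 1 by norm_num, rpow_sub_one (ne_of_gt hp), mul_inv]
          ring
      _ ≤ 4⁻¹ * (p ^ (-(3 / 2) : ℝ) * (M * profile (p * b))) := by
          have hpow : 0 ≤ p ^ (-(3 / 2) : ℝ) := rpow_nonneg (le_of_lt hp) _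
          gcongr
          exact hS p hp
      _ = _ := by ring
  have hkernel (x p : ℝ) : p ^ (-(1 / 2 : ℝ)) * exp (-(|x| ^ 2) / (4 * p)) * S p =
      exp (-((4 * p)⁻¹ * x ^ 2)) * (p ^ (-(1 / 2 : ℝ)) * S p) := by
    rw [sq_abs, neg_div, div_eq_inv_mul (x ^ 2), mul_comm (p ^ _), mul_assoc]
  have hc : ∀ᵐ p ∂volume.restrict (Ioi (0 : ℝ)), 0 ≤ (4 * p)⁻¹ := by
    filter_upwards [ae_restrict_mem measurableSet_Ioi] with p hp
    exact inv_nonneg.2 (mul_nonneg zero_le_four (le_of_lt hp))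
  simp only [hkernel]
  refine (abs_deriv_gaussianMixture_sub_le hc (by fun_prop)
    (integrableOn_rpow_mul_of_abs_le_profile (by norm_num) (by norm_num) hb hmeas hS)
    (((integrableOn_rpow_mul_profile (by norm_num) (by norm_num) hb).const_mul M).const_mul 4⁻¹)
    hrate x y).trans_eq ?_
  rw [MeasureTheory.integral_const_mul, MeasureTheory.integral_const_mul,
    integral_rpow_mul_profile_comp_mul _ hb,
    show -(-(3 / 2) : ℝ) - 1 = 1 / 2 by norm_num]
  ring

theorem exists_abs_kerEx_sub_le {T : ℝ} (hT : 0 ≤ T) {m : ℕ} {α lam : Fin (m + 1) → ℝ}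
    {k : Fin (m + 1)} (hk : ∀ j, α j ≤ α k) (hpos : ∀ j, 0 < α j) (hlt1 : ∀ j, α j < 1)
    (hlam : ∀ j, 0 < lam j) :
    ∃ C : ℝ, 0 ≤ C ∧ ∀ u ∈ Ioc 0 T, ∀ x y : ℝ,
      |kerEx m α lam x u - kerEx m α lam y u| ≤ C * u ^ (-(α k / 2) - 1) * |x - y| := by
  obtain ⟨C, hC, hS⟩ := exists_abs_Sconv_le hT hk hpos hlt1 hlam
  set J : ℝ := ∫ q in Ioi (0 : ℝ), q ^ (-(3 / 2) : ℝ) * profile q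
  have hJ : 0 ≤ J := setIntegral_nonneg measurableSet_Ioi fun q hq =>
    mul_nonneg (rpow_nonneg (le_of_lt hq) _) (profile_nonneg (le_of_lt hq))
  refine ⟨(4 * π) ^ (-(1 / 2 : ℝ)) * (1 / 2 * C * J), by positivity, fun u hu x y => ?_⟩
  have hu₀ : 0 < u := hu.1
  set S : ℝ → ℝ := fun p => Sconv m 0 α (fun j => lam j * p) u
  set b : ℝ := u ^ (-α k)
  have hb : 0 < b := rpow_pos_of_pos hu₀ _
  have hSp : ∀ p, 0 < p → |S p| ≤ C * u⁻¹ * profile (p * b) := fun p hp =>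
    (hS p hp u hu).trans_eq (mul_assoc _ _ _).symm
  have hlip := abs_deriv_heatMixture_sub_le (S := S) hb
    (measurable_Sconv 0 α lam u).aestronglyMeasurable hSp x y
  have hpow : u⁻¹ * b ^ (1 / 2 : ℝ) = u ^ (-(α k / 2) - 1) := by
    rw [← rpow_mul hu₀.le, rpow_sub_one hu₀.ne', div_eq_inv_mul]
    ring_nf
  unfold kerEx kerE Gam1
  rw [deriv_const_mul_field, deriv_const_mul_field, ← mul_sub, abs_mul,
    abs_of_nonneg (by positivity)]
  calc _ ≤ (4 * π) ^ (-(1 / 2 : ℝ)) * (1 / 2 * (C * u⁻¹) * (b ^ (1 / 2 : ℝ) * J) * |x - y|) := by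
        gcongr
    _ = _ := by
        rw [← hpow]
        ring

/-! ### Integration along a Hölder boundary -/

theorem intervalIntegrable_const_sub_rpow (t δ : ℝ) {a : ℝ} (ha : -1 < a) :
    IntervalIntegrable (fun τ => (t - τ) ^ a) volume (t - δ) t := by
  have hint : IntervalIntegrable (fun u : ℝ => u ^ a) volume 0 δ := intervalIntegrable_rpow' ha
  simpa only [sub_zero] using (hint.comp_sub_left t).symm

theorem integral_const_sub_rpow (t δ : ℝ) {a : ℝ} (ha : -1 < a) :
    ∫ τ in (t - δ)..t, (t - τ) ^ a = δ ^ (a + 1) / (a + 1) := by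
  rw [integral_comp_sub_left (fun u : ℝ => u ^ a) t, sub_self, sub_sub_cancel,
    integral_rpow (Or.inl ha), zero_rpow (by linarith), sub_zero]

theorem integral_abs_sub_along_holder_le {f : ℝ → ℝ → ℝ} {s : ℝ → ℝ} {K H β γ t δ : ℝ}
    (hγ : γ < β) (hK : 0 ≤ K) (hδ : 0 ≤ δ)
    (hf : ∀ u ∈ Ioc 0 δ, ∀ y z, |f y u - f z u| ≤ K * u ^ (-γ - 1) * |y - z|)
    (hs : ∀ τ ∈ Ioc (t - δ) t, |s t - s τ| ≤ H * |t - τ| ^ β) (x : ℝ) :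
    ∫ τ in (t - δ)..t, |f (x - s t) (t - τ) - f (x - s τ) (t - τ)| ≤
      K * H / (β - γ) * δ ^ (β - γ) := by
  have hbound : ∀ᵐ τ : ℝ, τ ∈ Ioc (t - δ) t →
      ‖|f (x - s t) (t - τ) - f (x - s τ) (t - τ)|‖ ≤ K * H * (t - τ) ^ (β - γ - 1) := by
    filter_upwards [Measure.ae_ne volume t] with τ hne hτ
    have hu : 0 < t - τ := sub_pos.2 (hτ.2.lt_of_ne hne)
    have hincr := hs τ hτ
    rw [abs_of_pos hu, abs_sub_comm] at hincr
    rw [Real.norm_eq_abs, abs_abs]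
    calc _ ≤ K * (t - τ) ^ (-γ - 1) * |s τ - s t| := by
          rw [← sub_sub_sub_cancel_left (s t) (s τ) x]
          exact hf (t - τ) ⟨hu, by linarith [hτ.1]⟩ _ _
      _ ≤ K * (t - τ) ^ (-γ - 1) * (H * (t - τ) ^ β) := by gcongr
      _ = K * H * (t - τ) ^ (β - γ - 1) := by
          rw [show β - γ - 1 = -γ - 1 + β by ring, rpow_add hu]
          ring
  have hexponent : -1 < β - γ - 1 := by linarith
  refine (le_abs_self _).trans ((intervalIntegral.norm_integral_le_of_norm_le
    (sub_le_self t hδ) hbound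
    ((intervalIntegrable_const_sub_rpow t δ hexponent).const_mul (K * H))).trans_eq ?_)
  rw [intervalIntegral.integral_const_mul, integral_const_sub_rpow t δ hexponent,
    sub_add_cancel]
  ring

theorem kerEx_difference_bound_general {m : ℕ} {α lam : Fin (m + 1) → ℝ} {k : Fin (m + 1)}
    (hk : ∀ j, α j ≤ α k) (hpos : ∀ j, 0 < α j) (hlt1 : ∀ j, α j < 1) (hlam : ∀ j, 0 < lam j)
    {T : ℝ} (hT : 0 ≤ T) {s : ℝ → ℝ} {β H : ℝ} (hβ : α k / 2 < β)
    (hs : ∀ t ∈ Icc 0 T, ∀ τ ∈ Icc 0 T, |s t - s τ| ≤ H * |t - τ| ^ β) :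
    ∃ C > (0 : ℝ), ∀ t ∈ Ioc 0 T, ∀ δ ∈ Ioo 0 t, ∀ x : ℝ,
      ∫ τ in (t - δ)..t,
          |kerEx m α lam (x - s t) (t - τ) - kerEx m α lam (x - s τ) (t - τ)| ≤
        C * δ ^ (β - α k / 2) := by
  obtain ⟨K, hK, hlip⟩ := exists_abs_kerEx_sub_le hT hk hpos hlt1 hlam
  refine ⟨max (K * H / (β - α k / 2)) 1, by positivity, fun t ht δ hδ x => ?_⟩
  refine (integral_abs_sub_along_holder_le hβ hK hδ.1.le
    (fun u hu => hlip u ⟨hu.1, hu.2.trans (hδ.2.le.trans ht.2)⟩)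
    (fun τ hτ => hs t ⟨ht.1.le, ht.2⟩ τ ⟨?_, hτ.2.trans ht.2⟩) x).trans ?_
  · linarith [hτ.1, hδ.2]
  · exact mul_le_mul_of_nonneg_right (le_max_left _ _) (rpow_nonneg hδ.1.le _)

/-- Hölder-in-`δ` bound for the difference of `E_x` along a Hölder boundary:
`∫_{t-δ}^t |E_x(x - s(t), t-τ) - E_x(x - s(τ), t-τ)| dτ ≤ C δ^{β - α_m/2}`. -/
theorem kerEx_difference_bound
    (m : ℕ) (α lam : Fin (m + 1) → ℝ)
    (hmono : StrictMono α) (hpos : ∀ j, 0 < α j) (hlt1 : ∀ j, α j < 1)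
    (hlam : ∀ j, 0 < lam j)
    (T : ℝ) (hT : 0 < T) (s : ℝ → ℝ)
    (β : ℝ) (hβ : α (Fin.last m) / 2 < β)
    (hs : ∀ t ∈ Set.Icc (0:ℝ) T, ∀ τ ∈ Set.Icc (0:ℝ) T, |s t - s τ| ≤ |t - τ| ^ β) :
    ∃ C > (0:ℝ), ∀ t ∈ Set.Ioc (0:ℝ) T, ∀ δ ∈ Set.Ioo (0:ℝ) t, ∀ x : ℝ,
      ∫ τ in (t - δ)..t,
          |kerEx m α lam (x - s t) (t - τ) - kerEx m α lam (x - s τ) (t - τ)| ≤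
        C * δ ^ (β - α (Fin.last m) / 2) :=
  kerEx_difference_bound_general (fun j => hmono.monotone (Fin.le_last j)) hpos hlt1 hlam hT.le hβ
    fun t ht τ hτ => (hs t ht τ hτ).trans_eq (one_mul _).symm
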